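/- arXiv:2003.04746 — 2 statements merged into one kernel-verified Lean document; each statement's English description precedes it below -/
import Mathlib

section
/- Let a > 0, b > 0 and λ > π⁴ + a·π². Set c_λ = √(2(λ − π⁴ − a·π²)/b)/π². Then u_λ(x) = c_λ·sin(πx) satisfies u_λ''''(x) − (a + b∫₀¹(u_λ'(t))²dt)·u_λ''(x) = λ·u_λ(x) on (0,1) with u_λ(0) = u_λ(1) = u_λ''(0) = u_λ''(1) = 0 and u_λ(x) > 0 on (0,1); moreover, every u ∈ C⁴([0,1]) which satisfies this problem with u(x) > 0 for all x ∈ (0,1) is equal to u_λ. -/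
/-!
Write `K` for the nonlocal coefficient of a positive solution `u`; once `u` is fixed, `K` is just a
number. As `lam > 0`, the polynomial `t² - K t - lam` factors as `(t - β)(t + α)` with `β > 0`, so
`w = u'' + α u` satisfies `w'' = β w` with `w(0) = w(1) = 0`. Since `(w w')' = w'² + β w² ≥ 0` and
`w w'` vanishes at both endpoints, `w = 0` (`eq_zero_of_deriv2_eq_pos_mul`), i.e. `u'' = -α u`.

Testing against the first eigenfunction, `(u' sin πx - π u cos πx)' = (π² - α) u sin πx`, and the
bracket vanishes at both endpoints; positivity of `u` forces `α = π²`
(`eigenvalue_eq_pi_sq`). Two constants of motion then give `u = C sin πx` with `u' = πC cos πx`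
(`eq_sin_of_deriv2`). Finally `∫ u'² = π² C² / 2` turns `lam = αβ = π² (K + π²)` into the equation
`(C π²)² = 2 (lam - π⁴ - a π²) / b`, which has exactly one positive root.
-/


open Set MeasureTheory intervalIntegral Real Filter Topology

/-- The `n`-th derivative of `u` on the interval `[0,1]` (one-sided at the endpoints). -/
noncomputable def D (n : ℕ) (u : ℝ → ℝ) : ℝ → ℝ :=
  iteratedDerivWithin n u (Set.Icc 0 1)

/-- The supremum norm `‖u‖∞ = sup_{x ∈ [0,1]} |u x|`. -/
noncomputable def normInf (u : ℝ → ℝ) : ℝ :=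
  ⨆ x : Set.Icc (0:ℝ) 1, |u x|

/-- The hinged boundary conditions `u(0) = u(1) = u''(0) = u''(1) = 0`. -/
def BC (u : ℝ → ℝ) : Prop :=
  u 0 = 0 ∧ u 1 = 0 ∧ D 2 u 0 = 0 ∧ D 2 u 1 = 0

/-- The Kirchhoff nonlocal coefficient `a + b ∫₀¹ (u'(t))² dt`. -/
noncomputable def KCoef (a b : ℝ) (u : ℝ → ℝ) : ℝ :=
  a + b * ∫ t in (0:ℝ)..1, (D 1 u t) ^ 2

lemma hasDerivWithinAt_D {u : ℝ → ℝ} (hu : ContDiffOn ℝ 4 u (Icc 0 1)) {k : ℕ} (hk : k < 4)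
    {x : ℝ} (hx : x ∈ Icc (0:ℝ) 1) :
    HasDerivWithinAt (D k u) (D (k + 1) u x) (Icc 0 1) x := by
  have hd : DifferentiableOn ℝ (D k u) (Icc 0 1) :=
    hu.differentiableOn_iteratedDerivWithin (by exact_mod_cast hk) (uniqueDiffOn_Icc one_pos)
  have h := (hd x hx).hasDerivWithinAt
  have e : D (k + 1) u x = derivWithin (D k u) (Icc 0 1) x := by
    simp only [D, iteratedDerivWithin_succ]
  rwa [e]

lemma D_succ_eqOn {u f f' : ℝ → ℝ} {k : ℕ} (h : EqOn (D k u) f (Icc 0 1))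
    (hf : ∀ x, HasDerivAt f (f' x) x) : EqOn (D (k + 1) u) f' (Icc 0 1) := by
  intro x hx
  have e : D (k + 1) u x = derivWithin (D k u) (Icc 0 1) x := by
    simp only [D, iteratedDerivWithin_succ]
  rw [e, derivWithin_congr h (h hx)]
  exact (hf x).hasDerivWithinAt.derivWithin (uniqueDiffOn_Icc one_pos x hx)

lemma monotoneOn_of_hasDerivWithinAt {f f' : ℝ → ℝ}
    (hf : ∀ x ∈ Icc (0:ℝ) 1, HasDerivWithinAt f (f' x) (Icc 0 1) x)
    (h0 : ∀ x ∈ Ioo (0:ℝ) 1, 0 ≤ f' x) : MonotoneOn f (Icc 0 1) := by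
  apply monotoneOn_of_hasDerivWithinAt_nonneg (f' := f') (convex_Icc 0 1)
    (fun x hx => (hf x hx).continuousWithinAt)
  · intro x hx
    exact (hf x (interior_subset hx)).mono interior_subset
  · intro x hx
    rw [interior_Icc] at hx
    exact h0 x hx

lemma eq_left_of_deriv_zero {f f' : ℝ → ℝ}
    (hf : ∀ x ∈ Icc (0:ℝ) 1, HasDerivWithinAt f (f' x) (Icc 0 1) x)
    (h0 : ∀ x ∈ Ioo (0:ℝ) 1, f' x = 0) : ∀ x ∈ Icc (0:ℝ) 1, f x = f 0 := by
  intro x hx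
  have l : (0:ℝ) ∈ Icc (0:ℝ) 1 := by simp
  have h1 := monotoneOn_of_hasDerivWithinAt hf (fun x hx => (h0 x hx).ge) l hx hx.1
  have h2 := monotoneOn_of_hasDerivWithinAt (f := fun x => - f x) (f' := fun x => - f' x)
    (fun x hx => (hf x hx).neg) (fun x hx => by simp [h0 x hx]) l hx hx.1
  simp only at h2
  linarith

/-- If `f' ≥ 0` and `f` vanishes at both endpoints, then `f' = 0` in the interior. -/
lemma deriv_eq_zero_of_nonneg {f f' : ℝ → ℝ}
    (hf : ∀ x ∈ Icc (0:ℝ) 1, HasDerivWithinAt f (f' x) (Icc 0 1) x)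
    (h0 : ∀ x ∈ Ioo (0:ℝ) 1, 0 ≤ f' x) (hf0 : f 0 = 0) (hf1 : f 1 = 0) :
    ∀ x ∈ Ioo (0:ℝ) 1, f' x = 0 := by
  have hm := monotoneOn_of_hasDerivWithinAt hf h0
  have hz : ∀ y ∈ Icc (0:ℝ) 1, f y = 0 := by
    intro y hy
    have h1 := hm (by simp) hy hy.1
    have h2 := hm hy (by simp) hy.2
    linarith
  intro x hx
  have hx' := Ioo_subset_Icc_self hx
  have h1 : HasDerivWithinAt f 0 (Icc 0 1) x :=
    (hasDerivWithinAt_const x (Icc (0:ℝ) 1) (0:ℝ)).congr hz (hz x hx')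
  exact (uniqueDiffOn_Icc one_pos x hx').eq_deriv _ (hf x hx') h1

/-- The Dirichlet problem `w'' = β w`, `w(0) = w(1) = 0` with `β > 0` has only the zero solution. -/
lemma eq_zero_of_deriv2_eq_pos_mul {w w₁ w₂ : ℝ → ℝ} {β : ℝ} (hβ : 0 < β)
    (h1 : ∀ x ∈ Icc (0:ℝ) 1, HasDerivWithinAt w (w₁ x) (Icc 0 1) x)
    (h2 : ∀ x ∈ Icc (0:ℝ) 1, HasDerivWithinAt w₁ (w₂ x) (Icc 0 1) x)
    (he : ∀ x ∈ Ioo (0:ℝ) 1, w₂ x = β * w x) (hw0 : w 0 = 0) (hw1 : w 1 = 0) :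
    ∀ x ∈ Icc (0:ℝ) 1, w x = 0 := by
  have key := deriv_eq_zero_of_nonneg (f := fun x => w x * w₁ x)
    (fun x hx => (h1 x hx).mul (h2 x hx))
    (fun x hx => by rw [he x hx]; nlinarith [mul_self_nonneg (w₁ x), mul_self_nonneg (w x)])
    (by simp [hw0]) (by simp [hw1])
  intro x hx
  rcases eq_or_lt_of_le hx.1 with rfl | h
  · exact hw0
  rcases eq_or_lt_of_le hx.2 with rfl | h'
  · exact hw1
  have k := key x ⟨h, h'⟩
  rw [he x ⟨h, h'⟩] at k
  have : β * (w x * w x) = 0 := by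
    have := mul_nonneg hβ.le (mul_self_nonneg (w x))
    nlinarith [mul_self_nonneg (w₁ x)]
  simpa [hβ.ne'] using this

lemma hasDerivAt_sin_pi (x : ℝ) :
    HasDerivAt (fun x => Real.sin (π * x)) (π * Real.cos (π * x)) x := by
  simpa [mul_comm] using ((hasDerivAt_id x).const_mul π).sin

lemma hasDerivAt_cos_pi (x : ℝ) :
    HasDerivAt (fun x => Real.cos (π * x)) (-(π * Real.sin (π * x))) x := by
  simpa [mul_comm] using ((hasDerivAt_id x).const_mul π).cos

lemma sin_pi_mul_pos {x : ℝ} (hx : x ∈ Ioo (0:ℝ) 1) : 0 < Real.sin (π * x) :=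
  Real.sin_pos_of_pos_of_lt_pi (mul_pos pi_pos hx.1) (by nlinarith [pi_pos, hx.2])

/-- The Wronskian of `u` with the first Dirichlet eigenfunction `sin πx`. -/
lemma hasDerivWithinAt_wronskian {u u₁ u₂ : ℝ → ℝ}
    (h1 : ∀ x ∈ Icc (0:ℝ) 1, HasDerivWithinAt u (u₁ x) (Icc 0 1) x)
    (h2 : ∀ x ∈ Icc (0:ℝ) 1, HasDerivWithinAt u₁ (u₂ x) (Icc 0 1) x)
    (x : ℝ) (hx : x ∈ Icc (0:ℝ) 1) :
    HasDerivWithinAt (fun x => u₁ x * Real.sin (π * x) - π * u x * Real.cos (π * x))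
      ((u₂ x + π ^ 2 * u x) * Real.sin (π * x)) (Icc 0 1) x := by
  have := ((h2 x hx).mul (hasDerivAt_sin_pi x).hasDerivWithinAt).sub
    (((h1 x hx).const_mul π).mul (hasDerivAt_cos_pi x).hasDerivWithinAt)
  exact this.congr_deriv (by ring)

/-- A Dirichlet eigenfunction that is positive in the interior belongs to the first eigenvalue. -/
lemma eigenvalue_eq_pi_sq {u u₁ u₂ : ℝ → ℝ} {α : ℝ}
    (h1 : ∀ x ∈ Icc (0:ℝ) 1, HasDerivWithinAt u (u₁ x) (Icc 0 1) x)
    (h2 : ∀ x ∈ Icc (0:ℝ) 1, HasDerivWithinAt u₁ (u₂ x) (Icc 0 1) x)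
    (he : ∀ x ∈ Icc (0:ℝ) 1, u₂ x = -α * u x) (hu0 : u 0 = 0) (hu1 : u 1 = 0)
    (hpos : ∀ x ∈ Ioo (0:ℝ) 1, 0 < u x) : α = π ^ 2 := by
  have hm : (1/2 : ℝ) ∈ Ioo (0:ℝ) 1 := by constructor <;> norm_num
  have hW := hasDerivWithinAt_wronskian h1 h2
  have hpr : ∀ x ∈ Ioo (0:ℝ) 1, 0 < u x * Real.sin (π * x) :=
    fun x hx => mul_pos (hpos x hx) (sin_pi_mul_pos hx)
  have hd : ∀ x ∈ Ioo (0:ℝ) 1, (u₂ x + π ^ 2 * u x) * Real.sin (π * x)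
      = (π ^ 2 - α) * (u x * Real.sin (π * x)) := by
    intro x hx
    rw [he x (Ioo_subset_Icc_self hx)]; ring
  have hz : (π ^ 2 - α) * (u (1/2) * Real.sin (π * (1/2))) = 0 := by
    rcases le_total 0 (π ^ 2 - α) with h | h
    · have := deriv_eq_zero_of_nonneg hW
        (fun x hx => by rw [hd x hx]; exact mul_nonneg h (hpr x hx).le)
        (by simp [hu0]) (by simp [hu1]) _ hm
      rwa [hd _ hm] at this
    · have := deriv_eq_zero_of_nonneg (fun x hx => (hW x hx).neg)
        (fun x hx => by
          rw [hd x hx]; exact neg_nonneg.2 (mul_nonpos_of_nonpos_of_nonneg h (hpr x hx).le))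
        (by simp [hu0]) (by simp [hu1]) _ hm
      rw [hd _ hm] at this
      linarith
  rcases mul_eq_zero.1 hz with h | h
  · linarith
  · exact absurd h (hpr _ hm).ne'

lemma eq_sin_of_deriv2 {u u₁ u₂ : ℝ → ℝ}
    (h1 : ∀ x ∈ Icc (0:ℝ) 1, HasDerivWithinAt u (u₁ x) (Icc 0 1) x)
    (h2 : ∀ x ∈ Icc (0:ℝ) 1, HasDerivWithinAt u₁ (u₂ x) (Icc 0 1) x)
    (he : ∀ x ∈ Icc (0:ℝ) 1, u₂ x = -π ^ 2 * u x) (hu0 : u 0 = 0) :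
    ∃ C : ℝ, ∀ x ∈ Icc (0:ℝ) 1, u x = C * Real.sin (π * x) := by
  have hf := eq_left_of_deriv_zero (hasDerivWithinAt_wronskian h1 h2)
    (fun x hx => by rw [he x (Ioo_subset_Icc_self hx)]; ring)
  have hg := eq_left_of_deriv_zero
    (f := fun x => u₁ x * Real.cos (π * x) + π * u x * Real.sin (π * x))
    (fun x hx => ((h2 x hx).mul (hasDerivAt_cos_pi x).hasDerivWithinAt).add
      (((h1 x hx).const_mul π).mul (hasDerivAt_sin_pi x).hasDerivWithinAt))
    (fun x hx => by rw [he x (Ioo_subset_Icc_self hx)]; ring)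
  refine ⟨u₁ 0 / π, fun x hx => ?_⟩
  have f := hf x hx
  have g := hg x hx
  simp [hu0] at f g
  have s := Real.sin_sq_add_cos_sq (π * x)
  have hp := pi_pos.ne'
  field_simp
  linear_combination (Real.sin (π * x)) * g - (Real.cos (π * x)) * f - π * u x * s

lemma D_sin {u : ℝ → ℝ} {C : ℝ} (h : EqOn u (fun x => C * Real.sin (π * x)) (Icc 0 1)) :
    EqOn (D 1 u) (fun x => C * π * Real.cos (π * x)) (Icc 0 1) ∧
    EqOn (D 2 u) (fun x => -(C * π ^ 2) * Real.sin (π * x)) (Icc 0 1) ∧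
    EqOn (D 4 u) (fun x => C * π ^ 4 * Real.sin (π * x)) (Icc 0 1) := by
  have d0 : EqOn (D 0 u) (fun x => C * Real.sin (π * x)) (Icc 0 1) := by
    intro x hx
    simpa [D] using h hx
  have d1 : EqOn (D 1 u) (fun x => C * π * Real.cos (π * x)) (Icc 0 1) :=
    D_succ_eqOn d0 fun x => ((hasDerivAt_sin_pi x).const_mul C).congr_deriv (by ring)
  have d2 : EqOn (D 2 u) (fun x => -(C * π ^ 2) * Real.sin (π * x)) (Icc 0 1) :=
    D_succ_eqOn d1 fun x => ((hasDerivAt_cos_pi x).const_mul (C * π)).congr_deriv (by ring)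
  have d3 : EqOn (D 3 u) (fun x => -(C * π ^ 3) * Real.cos (π * x)) (Icc 0 1) :=
    D_succ_eqOn d2 fun x => ((hasDerivAt_sin_pi x).const_mul _).congr_deriv (by ring)
  exact ⟨d1, d2, D_succ_eqOn d3 fun x =>
    ((hasDerivAt_cos_pi x).const_mul _).congr_deriv (by ring)⟩

lemma KCoef_sin (a b : ℝ) {u : ℝ → ℝ} {C : ℝ}
    (h : EqOn u (fun x => C * Real.sin (π * x)) (Icc 0 1)) :
    KCoef a b u = a + b * (C ^ 2 * π ^ 2 / 2) := by
  have e : ∫ t in (0:ℝ)..1, (D 1 u t) ^ 2 =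
      ∫ t in (0:ℝ)..1, C ^ 2 * π ^ 2 * Real.cos (π * t) ^ 2 := by
    apply intervalIntegral.integral_congr
    intro t ht
    rw [uIcc_of_le zero_le_one] at ht
    simp only [(D_sin h).1 ht]
    ring
  have i : ∫ t in (0:ℝ)..1, Real.cos (π * t) ^ 2 = 1 / 2 := by
    rw [intervalIntegral.integral_comp_mul_left (fun t => Real.cos t ^ 2) pi_ne_zero,
      integral_cos_sq]
    simp
    field_simp
  rw [KCoef, e, intervalIntegral.integral_const_mul, i]
  ring

/-- For `λ > π⁴ + a·π²`, the function `u_λ(x) = c_λ·sin(πx)` with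
`c_λ = √(2(λ - π⁴ - a·π²)/b)/π²` is a positive solution of the nonlinear eigenvalue problem,
and every positive solution coincides with it. -/
theorem stmt9 (a b lam : ℝ) (ha : 0 < a) (hb : 0 < b)
    (hlam : π ^ 4 + a * π ^ 2 < lam)
    (c : ℝ) (hc : c = Real.sqrt (2 * (lam - π ^ 4 - a * π ^ 2) / b) / π ^ 2)
    (ulam : ℝ → ℝ) (hul : ulam = fun x => c * Real.sin (π * x)) :
    (ContDiffOn ℝ 4 ulam (Set.Icc 0 1) ∧
      (∀ x ∈ Set.Ioo (0:ℝ) 1, D 4 ulam x - KCoef a b ulam * D 2 ulam x = lam * ulam x) ∧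
      BC ulam ∧ (∀ x ∈ Set.Ioo (0:ℝ) 1, 0 < ulam x)) ∧
    (∀ u : ℝ → ℝ, ContDiffOn ℝ 4 u (Set.Icc 0 1) →
        (∀ x ∈ Set.Ioo (0:ℝ) 1, D 4 u x - KCoef a b u * D 2 u x = lam * u x) → BC u →
        (∀ x ∈ Set.Ioo (0:ℝ) 1, 0 < u x) → Set.EqOn u ulam (Set.Icc 0 1)) := by
  have hp := pi_pos
  have hR : 0 < 2 * (lam - π ^ 4 - a * π ^ 2) / b := div_pos (by linarith) hb
  have hcpos : 0 < c := by
    rw [hc]; exact div_pos (Real.sqrt_pos.2 hR) (by positivity)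
  have hcp : c * π ^ 2 = Real.sqrt (2 * (lam - π ^ 4 - a * π ^ 2) / b) := by
    rw [hc]; field_simp
  have hc2 : b * (c * π ^ 2) ^ 2 = 2 * (lam - π ^ 4 - a * π ^ 2) := by
    rw [hcp, Real.sq_sqrt hR.le]; field_simp
  have hE : EqOn ulam (fun x => c * Real.sin (π * x)) (Icc 0 1) := fun x _ => by rw [hul]
  refine ⟨⟨?_, ?_, ?_, ?_⟩, ?_⟩
  · rw [hul]; fun_prop
  · intro x hx
    have hx' := Ioo_subset_Icc_self hx
    rw [KCoef_sin a b hE, (D_sin hE).2.1 hx', (D_sin hE).2.2 hx', hE hx']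
    linear_combination (c * Real.sin (π * x) / 2) * hc2
  · refine ⟨by simp [hul], by simp [hul], ?_, ?_⟩
    · rw [(D_sin hE).2.1 (by simp)]; simp
    · rw [(D_sin hE).2.1 (by simp)]; simp
  · intro x hx
    rw [hul]
    exact mul_pos hcpos (sin_pi_mul_pos hx)
  intro u hu heq ⟨hu0, hu1, hu20, hu21⟩ hpos
  have hlam0 : 0 < lam := lt_trans (by positivity) hlam
  set K := KCoef a b u with hK
  -- `β` and `-α` are the roots of `t² - K t - lam`.
  obtain ⟨α, β, hβ, hsub, hmul⟩ : ∃ α β : ℝ, 0 < β ∧ β - α = K ∧ α * β = lam := by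
    have hs := Real.sq_sqrt (show 0 ≤ K ^ 2 + 4 * lam by positivity)
    refine ⟨(Real.sqrt (K ^ 2 + 4 * lam) - K) / 2, (Real.sqrt (K ^ 2 + 4 * lam) + K) / 2,
      ?_, by ring, by linear_combination hs / 4⟩
    have : -K < Real.sqrt (K ^ 2 + 4 * lam) := Real.lt_sqrt_of_sq_lt (by nlinarith)
    linarith
  have hD0 : D 0 u = u := by simp [D]
  have d0 : ∀ x ∈ Icc (0:ℝ) 1, HasDerivWithinAt u (D 1 u x) (Icc 0 1) x := by
    intro x hx
    simpa [hD0] using hasDerivWithinAt_D hu (k := 0) (by norm_num) hx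
  have d1 : ∀ x ∈ Icc (0:ℝ) 1, HasDerivWithinAt (D 1 u) (D 2 u x) (Icc 0 1) x :=
    fun x hx => hasDerivWithinAt_D hu (by norm_num) hx
  have d2 : ∀ x ∈ Icc (0:ℝ) 1, HasDerivWithinAt (D 2 u) (D 3 u x) (Icc 0 1) x :=
    fun x hx => hasDerivWithinAt_D hu (by norm_num) hx
  have d3 : ∀ x ∈ Icc (0:ℝ) 1, HasDerivWithinAt (D 3 u) (D 4 u x) (Icc 0 1) x :=
    fun x hx => hasDerivWithinAt_D hu (by norm_num) hx
  have hw := eq_zero_of_deriv2_eq_pos_mul (w := fun x => D 2 u x + α * u x) hβ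
    (fun x hx => (d2 x hx).add ((d0 x hx).const_mul α))
    (fun x hx => (d3 x hx).add ((d1 x hx).const_mul α))
    (fun x hx => by linear_combination heq x hx - D 2 u x * hsub - u x * hmul)
    (by simp [hu0, hu20]) (by simp [hu1, hu21])
  have he : ∀ x ∈ Icc (0:ℝ) 1, D 2 u x = -α * u x := fun x hx => by linarith [hw x hx]
  have hα := eigenvalue_eq_pi_sq d0 d1 he hu0 hu1 hpos
  rw [hα] at he
  obtain ⟨C, hC⟩ := eq_sin_of_deriv2 d0 d1 he hu0
  have hCpos : 0 < C := by
    have hm : (1/2 : ℝ) ∈ Ioo (0:ℝ) 1 := by constructor <;> norm_num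
    have h := hpos _ hm
    rw [hC _ (Ioo_subset_Icc_self hm)] at h
    exact pos_of_mul_pos_left h (sin_pi_mul_pos hm).le
  have hKC := KCoef_sin a b hC
  rw [← hK] at hKC
  have hC2 : b * (C * π ^ 2) ^ 2 = 2 * (lam - π ^ 4 - a * π ^ 2) := by
    rw [hKC] at hsub
    rw [hα] at hsub hmul
    linear_combination 2 * hmul - 2 * π ^ 2 * hsub
  have hsq : (C * π ^ 2) ^ 2 = (c * π ^ 2) ^ 2 := mul_left_cancel₀ hb.ne' (hC2.trans hc2.symm)
  have hCc : C = c := by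
    have h := (sq_eq_sq₀ (by positivity) (by positivity)).1 hsq
    exact mul_right_cancel₀ (by positivity) h
  intro x hx
  rw [hC x hx, hE hx, hCc]
end

section
/- Let a > 0 and b > 0. For each λ > π⁴ + a·π², let u_λ denote the unique positive solution of u''''(x) − (a + b∫₀¹(u'(t))²dt)·u''(x) = λ·u(x) on (0,1) with u(0) = u(1) = u''(0) = u''(1) = 0. Then ‖u_λ‖∞ → 0 as λ → (π⁴ + a·π²)⁺ and ‖u_λ‖∞ → +∞ as λ → +∞. -/
/-!
The nonlocal coefficient `κ = a + b ∫₀¹ u'²` is a number, so a positive solution `u` solves a linear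
constant-coefficient problem. Two integral identities determine its size, without solving the
equation.

* Testing with the first eigenfunction `sin (π x)` gives
  `(λ - π⁴ - κ π²) ∫₀¹ u sin (π x) = 0`. Positivity of `u` forces `λ = π⁴ + κ π²`, so the energy
  `E = ∫₀¹ u'²` is exactly `(λ - π⁴ - a π²) / (b π²)` (`energy_eq`).
* Testing with `u` itself gives `λ ∫₀¹ u² = ∫₀¹ u''² + κ E ≥ κ E` (`energy_le`).

Since `u 0 = 0`, Cauchy–Schwarz gives `‖u‖∞² ≤ E`, which tends to `0` as `λ → π⁴ + a π²`.
Conversely `λ ‖u‖∞² ≥ λ ∫₀¹ u² ≥ κ E`, where `κ / λ → 1 / π²` and `E → ∞` as `λ → ∞`.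
-/

open Set MeasureTheory intervalIntegral Real Filter Topology

lemma D_zero (u : ℝ → ℝ) : D 0 u = u := by
  simp [D]

lemma continuousOn_D {u : ℝ → ℝ} (h : ContDiffOn ℝ 4 u (Icc 0 1)) {n : ℕ} (hn : n ≤ 4) :
    ContinuousOn (D n u) (Icc 0 1) :=
  h.continuousOn_iteratedDerivWithin (by exact_mod_cast hn) (uniqueDiffOn_Icc zero_lt_one)

lemma hasDerivAt_D {u : ℝ → ℝ} (h : ContDiffOn ℝ 4 u (Icc 0 1)) {n : ℕ} (hn : n < 4)
    {x : ℝ} (hx : x ∈ Ioo (0:ℝ) 1) : HasDerivAt (D n u) (D (n + 1) u x) x := by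
  have h1 : DifferentiableOn ℝ (D n u) (Icc 0 1) :=
    h.differentiableOn_iteratedDerivWithin (by exact_mod_cast hn) (uniqueDiffOn_Icc zero_lt_one)
  have h2 := (h1 x (Ioo_subset_Icc_self hx)).hasDerivWithinAt
  have h3 := h2.hasDerivAt (Icc_mem_nhds hx.1 hx.2)
  have h4 : D (n + 1) u x = derivWithin (D n u) (Icc 0 1) x := by
    simp only [D]
    rw [iteratedDerivWithin_succ]
  rwa [h4]

lemma hasDerivAt_self {u : ℝ → ℝ} (h : ContDiffOn ℝ 4 u (Icc 0 1))
    {x : ℝ} (hx : x ∈ Ioo (0:ℝ) 1) : HasDerivAt u (D 1 u x) x := by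
  simpa [D_zero] using hasDerivAt_D h (n := 0) (by norm_num) hx

/-- Testing the linear equation `u'''' - κ u'' = λ u` with `sin (π x)`. -/
lemma eigenvalue_eq {u : ℝ → ℝ} {κ lam : ℝ} (h : ContDiffOn ℝ 4 u (Icc 0 1))
    (heq : ∀ x ∈ Ioo (0:ℝ) 1, D 4 u x - κ * D 2 u x = lam * u x)
    (hbc : BC u) (hpos : ∀ x ∈ Ioo (0:ℝ) 1, 0 < u x) :
    lam = π ^ 4 + κ * π ^ 2 := by
  have c0 := h.continuousOn
  have c1 := continuousOn_D h (n := 1) (by norm_num)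
  have c2 := continuousOn_D h (n := 2) (by norm_num)
  have c3 := continuousOn_D h (n := 3) (by norm_num)
  have cus : ContinuousOn (fun x => u x * sin (π * x)) (Icc 0 1) := by fun_prop
  -- The boundary terms produced by integrating by parts against `sin (π x)`.
  let G : ℝ → ℝ := fun x =>
    (D 3 u x * sin (π * x) - π * D 2 u x * cos (π * x) - π ^ 2 * D 1 u x * sin (π * x)
      + π ^ 3 * u x * cos (π * x)) - κ * (D 1 u x * sin (π * x) - π * u x * cos (π * x))
  have cG : ContinuousOn G (Icc 0 1) := by
    simp only [G]; fun_prop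
  have dG : ∀ x ∈ Ioo (0:ℝ) 1,
      HasDerivAt G ((lam - π ^ 4 - κ * π ^ 2) * (u x * sin (π * x))) x := by
    intro x hx
    have d0 := hasDerivAt_self h hx
    have d1 := hasDerivAt_D h (n := 1) (by norm_num) hx
    have d2 := hasDerivAt_D h (n := 2) (by norm_num) hx
    have d3 := hasDerivAt_D h (n := 3) (by norm_num) hx
    have dl : HasDerivAt (fun x : ℝ => π * x) π x := by
      simpa using (hasDerivAt_id x).const_mul π
    have ds := dl.sin
    have dc := dl.cos
    have := ((((d3.mul ds).sub ((d2.const_mul π).mul dc)).sub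
      ((d1.const_mul (π ^ 2)).mul ds)).add ((d0.const_mul (π ^ 3)).mul dc)).sub
      (((d1.mul ds).sub ((d0.const_mul π).mul dc)).const_mul κ)
    refine this.congr_deriv ?_
    have e := heq x hx
    norm_num at e ⊢
    linear_combination sin (π * x) * e
  have key := integral_eq_sub_of_hasDerivAt_of_le zero_le_one cG dG
    ((ContinuousOn.intervalIntegrable_of_Icc zero_le_one (by fun_prop)))
  obtain ⟨b0, b1, b2, b3⟩ := hbc
  have hG : G 1 - G 0 = 0 := by simp [G, b0, b1, b2, b3]
  rw [hG, intervalIntegral.integral_const_mul] at key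
  have hp : 0 < ∫ x in (0:ℝ)..1, u x * sin (π * x) := by
    refine intervalIntegral_pos_of_pos_on (cus.intervalIntegrable_of_Icc zero_le_one) ?_ zero_lt_one
    intro x hx
    refine mul_pos (hpos x hx) (sin_pos_of_pos_of_lt_pi (mul_pos pi_pos hx.1) ?_)
    nlinarith [pi_pos, hx.2]
  rcases mul_eq_zero.1 key with hl | hl
  · linarith
  · exact absurd hl (ne_of_gt hp)

/-- Testing the linear equation `u'''' - κ u'' = λ u` with `u` and discarding `∫ u''²`. -/
lemma energy_le {u : ℝ → ℝ} {κ lam : ℝ} (h : ContDiffOn ℝ 4 u (Icc 0 1))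
    (heq : ∀ x ∈ Ioo (0:ℝ) 1, D 4 u x - κ * D 2 u x = lam * u x) (hbc : BC u) :
    κ * ∫ x in (0:ℝ)..1, (D 1 u x) ^ 2 ≤ lam * ∫ x in (0:ℝ)..1, (u x) ^ 2 := by
  have c0 := h.continuousOn
  have c1 := continuousOn_D h (n := 1) (by norm_num)
  have c2 := continuousOn_D h (n := 2) (by norm_num)
  have c3 := continuousOn_D h (n := 3) (by norm_num)
  -- The boundary terms produced by integrating by parts against `u`.
  let H : ℝ → ℝ := fun x => D 3 u x * u x - D 2 u x * D 1 u x - κ * (D 1 u x * u x)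
  have cH : ContinuousOn H (Icc 0 1) := by
    simp only [H]; fun_prop
  have dH : ∀ x ∈ Ioo (0:ℝ) 1,
      HasDerivAt H (lam * (u x) ^ 2 - (D 2 u x) ^ 2 - κ * (D 1 u x) ^ 2) x := by
    intro x hx
    have d0 := hasDerivAt_self h hx
    have d1 := hasDerivAt_D h (n := 1) (by norm_num) hx
    have d2 := hasDerivAt_D h (n := 2) (by norm_num) hx
    have d3 := hasDerivAt_D h (n := 3) (by norm_num) hx
    have := ((d3.mul d0).sub (d2.mul d1)).sub ((d1.mul d0).const_mul κ)
    refine this.congr_deriv ?_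
    have e := heq x hx
    norm_num at e ⊢
    linear_combination u x * e
  have i0 : IntervalIntegrable (fun x => lam * (u x) ^ 2) volume 0 1 :=
    ContinuousOn.intervalIntegrable_of_Icc zero_le_one (by fun_prop)
  have i1 : IntervalIntegrable (fun x => κ * (D 1 u x) ^ 2) volume 0 1 :=
    ContinuousOn.intervalIntegrable_of_Icc zero_le_one (by fun_prop)
  have i2 : IntervalIntegrable (fun x => (D 2 u x) ^ 2) volume 0 1 :=
    ContinuousOn.intervalIntegrable_of_Icc zero_le_one (by fun_prop)
  have key := integral_eq_sub_of_hasDerivAt_of_le zero_le_one cH dH ((i0.sub i2).sub i1)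
  obtain ⟨b0, b1, b2, b3⟩ := hbc
  have hH : H 1 - H 0 = 0 := by simp [H, b0, b1, b2, b3]
  rw [hH, intervalIntegral.integral_sub (i0.sub i2) i1, intervalIntegral.integral_sub i0 i2,
    intervalIntegral.integral_const_mul, intervalIntegral.integral_const_mul] at key
  have : 0 ≤ ∫ x in (0:ℝ)..1, (D 2 u x) ^ 2 :=
    intervalIntegral.integral_nonneg zero_le_one fun x _ => sq_nonneg _
  linarith

/-- The one-dimensional Sobolev inequality `u(x)² ≤ ∫₀¹ u'²` for `u 0 = 0`. -/
lemma sq_le_energy {u : ℝ → ℝ} (h : ContDiffOn ℝ 4 u (Icc 0 1)) (h0 : u 0 = 0)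
    {x : ℝ} (hx : x ∈ Icc (0:ℝ) 1) : (u x) ^ 2 ≤ ∫ t in (0:ℝ)..1, (D 1 u t) ^ 2 := by
  have c1 := continuousOn_D h (n := 1) (by norm_num)
  have hsub : Icc 0 x ⊆ Icc (0:ℝ) 1 := Icc_subset_Icc_right hx.2
  have c1x := c1.mono hsub
  have j1 : IntervalIntegrable (D 1 u) volume 0 x := c1x.intervalIntegrable_of_Icc hx.1
  have j2 : IntervalIntegrable (fun t => (D 1 u t) ^ 2) volume 0 x :=
    ContinuousOn.intervalIntegrable_of_Icc hx.1 (by fun_prop)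
  have j3 : IntervalIntegrable (fun t => 2 * u x * D 1 u t) volume 0 x := j1.const_mul _
  have ftc := integral_eq_sub_of_hasDerivAt_of_le hx.1 (h.continuousOn.mono hsub)
    (fun t ht => hasDerivAt_self h ⟨ht.1, ht.2.trans_le hx.2⟩) j1
  rw [h0, sub_zero] at ftc
  -- Cauchy–Schwarz, in the form `0 ≤ ∫₀ˣ (u' - u(x))²`.
  have cs : 0 ≤ ∫ t in (0:ℝ)..x, ((D 1 u t) ^ 2 - 2 * u x * D 1 u t + (u x) ^ 2) :=
    intervalIntegral.integral_nonneg hx.1 fun t _ => by nlinarith [sq_nonneg (D 1 u t - u x)]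
  rw [intervalIntegral.integral_add (j2.sub j3) (by simp), intervalIntegral.integral_sub j2 j3,
    intervalIntegral.integral_const_mul, ftc, intervalIntegral.integral_const] at cs
  have mono : ∫ t in (0:ℝ)..x, (D 1 u t) ^ 2 ≤ ∫ t in (0:ℝ)..1, (D 1 u t) ^ 2 :=
    intervalIntegral.integral_mono_interval le_rfl hx.1 hx.2
      (Eventually.of_forall fun t => sq_nonneg _)
      (ContinuousOn.intervalIntegrable_of_Icc zero_le_one (by fun_prop))
  simp only [sub_zero, smul_eq_mul] at cs
  nlinarith [mul_nonneg (sub_nonneg.2 hx.2) (sq_nonneg (u x))]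

lemma abs_le_normInf {u : ℝ → ℝ} (h : ContinuousOn u (Icc 0 1)) {x : ℝ}
    (hx : x ∈ Icc (0:ℝ) 1) : |u x| ≤ normInf u := by
  have hb : BddAbove (Set.range fun y : Icc (0:ℝ) 1 => |u y|) := by
    have := isCompact_Icc.bddAbove_image h.abs
    rwa [Set.image_eq_range] at this
  exact le_ciSup hb ⟨x, hx⟩

lemma normInf_nonneg (u : ℝ → ℝ) : 0 ≤ normInf u :=
  Real.iSup_nonneg fun _ => abs_nonneg _

lemma integral_sq_le_normInf {u : ℝ → ℝ} (h : ContinuousOn u (Icc 0 1)) :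
    ∫ x in (0:ℝ)..1, (u x) ^ 2 ≤ normInf u ^ 2 := by
  have := intervalIntegral.integral_mono_on (μ := volume) (zero_le_one' ℝ)
    (f := fun x => (u x) ^ 2) (g := fun _ => normInf u ^ 2)
    (ContinuousOn.intervalIntegrable_of_Icc zero_le_one (by fun_prop)) (by simp)
    (fun x hx => sq_le_sq' (abs_le.1 (abs_le_normInf h hx)).1 (abs_le.1 (abs_le_normInf h hx)).2)
  simpa using this

/-- The energy of a positive solution as an explicit function of `λ`. -/
lemma energy_eq {a b lam : ℝ} (hb : 0 < b) {u : ℝ → ℝ} (h : ContDiffOn ℝ 4 u (Icc 0 1))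
    (heq : ∀ x ∈ Ioo (0:ℝ) 1, D 4 u x - KCoef a b u * D 2 u x = lam * u x)
    (hbc : BC u) (hpos : ∀ x ∈ Ioo (0:ℝ) 1, 0 < u x) :
    ∫ t in (0:ℝ)..1, (D 1 u t) ^ 2 = (lam - (π ^ 4 + a * π ^ 2)) / (b * π ^ 2) := by
  have := eigenvalue_eq h heq hbc hpos
  have hp := pi_pos
  rw [eq_div_iff (by positivity)]
  unfold KCoef at this
  linear_combination -this

/-- If `U lam` denotes, for each `λ > π⁴ + a·π²`, the (unique) positive
solution of the nonlinear eigenvalue problem, then `‖U λ‖∞ → 0` as `λ → (π⁴ + a·π²)⁺` and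
`‖U λ‖∞ → +∞` as `λ → +∞`. -/
theorem stmt10 (a b : ℝ) (ha : 0 < a) (hb : 0 < b)
    (U : ℝ → ℝ → ℝ)
    (hU : ∀ lam : ℝ, π ^ 4 + a * π ^ 2 < lam →
      ContDiffOn ℝ 4 (U lam) (Set.Icc 0 1) ∧
      (∀ x ∈ Set.Ioo (0:ℝ) 1,
        D 4 (U lam) x - KCoef a b (U lam) * D 2 (U lam) x = lam * U lam x) ∧
      BC (U lam) ∧ (∀ x ∈ Set.Ioo (0:ℝ) 1, 0 < U lam x)) :
    Tendsto (fun lam => normInf (U lam)) (𝓝[>] (π ^ 4 + a * π ^ 2)) (𝓝 0) ∧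
    Tendsto (fun lam => normInf (U lam)) atTop atTop := by
  have hp := pi_pos
  have hE : ∀ lam : ℝ, π ^ 4 + a * π ^ 2 < lam → ∫ t in (0:ℝ)..1, (D 1 (U lam) t) ^ 2
      = (lam - (π ^ 4 + a * π ^ 2)) / (b * π ^ 2) := fun lam hl => by
    obtain ⟨h, heq, hbc, hpos⟩ := hU lam hl
    exact energy_eq hb h heq hbc hpos
  constructor
  · have hlim : Tendsto (fun lam : ℝ => √((lam - (π ^ 4 + a * π ^ 2)) / (b * π ^ 2)))
        (𝓝[>] (π ^ 4 + a * π ^ 2)) (𝓝 0) := by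
      have hc : Continuous (fun lam : ℝ => √((lam - (π ^ 4 + a * π ^ 2)) / (b * π ^ 2))) := by
        fun_prop
      have := (hc.tendsto (π ^ 4 + a * π ^ 2)).mono_left
        (nhdsWithin_le_nhds (s := Ioi (π ^ 4 + a * π ^ 2)))
      simpa using this
    refine squeeze_zero' (Eventually.of_forall fun _ => normInf_nonneg _) ?_ hlim
    filter_upwards [self_mem_nhdsWithin] with lam hl
    obtain ⟨h, -, hbc, -⟩ := hU lam hl
    have : Nonempty (Icc (0:ℝ) 1) := ⟨⟨0, by simp⟩⟩
    refine ciSup_le fun x => abs_le_sqrt ?_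
    rw [← hE lam hl]
    exact sq_le_energy h hbc.1 x.2
  · have hlim : Tendsto
        (fun lam : ℝ => √((lam - (π ^ 4 + a * π ^ 2)) / (b * π ^ 2) / (2 * π ^ 2)))
        atTop atTop := by
      refine tendsto_sqrt_atTop.comp (Tendsto.atTop_div_const (by positivity)
        (Tendsto.atTop_div_const (by positivity) ?_))
      exact tendsto_atTop_add_const_right _ _ tendsto_id
    refine tendsto_atTop_mono' _ ?_ hlim
    -- For `λ ≥ 2π⁴` the coefficient `κ = (λ - π⁴) / π²` is at least `λ / (2π²)`.
    filter_upwards [eventually_gt_atTop (π ^ 4 + a * π ^ 2), eventually_ge_atTop (2 * π ^ 4)]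
      with lam hl hl2
    obtain ⟨h, heq, hbc, hpos⟩ := hU lam hl
    have hκ := eigenvalue_eq h heq hbc hpos
    have hen := energy_le h heq hbc
    have hsq := integral_sq_le_normInf h.continuousOn
    rw [hE lam hl] at hen
    have hlam : 0 < lam := lt_of_lt_of_le (by positivity) hl2
    set E := (lam - (π ^ 4 + a * π ^ 2)) / (b * π ^ 2) with hEdef
    have hE0 : 0 ≤ E := div_nonneg (by linarith) (by positivity)
    rw [sqrt_le_left (normInf_nonneg _), div_le_iff₀ (by positivity)]
    have h1 : lam * E ≤ lam * (normInf (U lam) ^ 2 * (2 * π ^ 2)) := by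
      calc lam * E ≤ (2 * π ^ 2 * KCoef a b (U lam)) * E :=
            mul_le_mul_of_nonneg_right (by linarith) hE0
        _ = 2 * π ^ 2 * (KCoef a b (U lam) * E) := by ring
        _ ≤ 2 * π ^ 2 * (lam * normInf (U lam) ^ 2) :=
            mul_le_mul_of_nonneg_left
              (hen.trans (mul_le_mul_of_nonneg_left hsq hlam.le)) (by positivity)
        _ = _ := by ring
    exact le_of_mul_le_mul_left h1 hlam
end
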